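/- arXiv:2403.19955 — 8 statements merged into one kernel-verified Lean document; each statement's English description precedes it below -/
import Mathlib

section
/- (Theorem 1) Let K ≤ τ be positive integers and P_1, …, P_K > 0. For every K×τ complex matrix X whose k-th row x_k satisfies ‖x_k‖² ≤ P_k for all k, and such that X X^H is invertible, it holds that Tr[(X X^H)^{-1}] ≥ Σ_{k=1}^K 1/P_k. Equality holds if and only if X X^H = diag{P_1, …, P_K}. -/
open Matrix

/-!
A Hermitian guess `D` for the inverse of a positive definite `G` satisfies
`(G⁻¹ - D) G (G⁻¹ - D) = G⁻¹ - 2 D + D G D`, and the left-hand side is positive semidefinite.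
Taking traces gives `tr G⁻¹ ≥ 2 tr D - tr (D G D)`, with equality iff `G D = 1`. For
`D = diag(1/P_k)` and `G_kk ≤ P_k` one has `tr (D G D) = ∑ G_kk / P_k² ≤ ∑ 1/P_k = tr D`,
so `tr G⁻¹ ≥ ∑ 1/P_k`.
-/

lemma inv_sub_mul_mul_inv_sub {n R : Type*} [Fintype n] [DecidableEq n] [CommRing R]
    {G : Matrix n n R} (hG : IsUnit G) (D : Matrix n n R) :
    (G⁻¹ - D) * G * (G⁻¹ - D) = G⁻¹ - 2 • D + D * G * D := by
  have hdet : IsUnit G.det := (isUnit_iff_isUnit_det G).mp hG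
  have hleft : (G⁻¹ - D) * G = 1 - D * G := by rw [sub_mul, nonsing_inv_mul G hdet]
  rw [hleft, sub_mul, one_mul, mul_sub, mul_nonsing_inv_cancel_right G D hdet]
  abel

lemma mul_diagonal_eq_one_iff {n F : Type*} [Fintype n] [DecidableEq n] [Field F] {d : n → F}
    (hd : ∀ k, d k ≠ 0) (G : Matrix n n F) :
    G * diagonal d = 1 ↔ G = diagonal fun k => (d k)⁻¹ := by
  have hinv : (diagonal fun k => (d k)⁻¹) * diagonal d = 1 := by
    simp only [diagonal_mul_diagonal, inv_mul_cancel₀ (hd _), diagonal_one]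
  exact ⟨fun h => left_inv_eq_left_inv h hinv, fun h => h ▸ hinv⟩

section RCLike

variable {m n 𝕜 : Type*} [Fintype n] [RCLike 𝕜]

lemma re_self_mul_conjTranspose_apply_self (X : Matrix m n 𝕜) (k : m) :
    RCLike.re ((X * Xᴴ) k k) = ∑ j, ‖X k j‖ ^ 2 := by
  simp only [mul_apply, conjTranspose_apply, RCLike.star_def, RCLike.mul_conj, map_sum,
    ← RCLike.ofReal_pow, RCLike.ofReal_re]

lemma re_trace_diagonal_mul_mul_diagonal [DecidableEq n] (G : Matrix n n 𝕜) (d : n → ℝ) :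
    RCLike.re (diagonal (fun k => (d k : 𝕜)) * G * diagonal fun k => (d k : 𝕜)).trace =
      ∑ k, d k * RCLike.re (G k k) * d k := by
  simp only [trace, diag_apply, mul_diagonal, diagonal_mul, map_sum, RCLike.re_mul_ofReal,
    RCLike.re_ofReal_mul]

lemma re_trace_diagonal_inv_mul_mul_diagonal_inv_le [DecidableEq n] {G : Matrix n n 𝕜}
    {P : n → ℝ} (hP : ∀ k, 0 < P k) (hGP : ∀ k, RCLike.re (G k k) ≤ P k) :
    RCLike.re (diagonal (fun k => (((P k)⁻¹ : ℝ) : 𝕜)) * G *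
      diagonal fun k => (((P k)⁻¹ : ℝ) : 𝕜)).trace ≤ ∑ k, (P k)⁻¹ := by
  rw [re_trace_diagonal_mul_mul_diagonal]
  refine Finset.sum_le_sum fun k _ => ?_
  have hPk := hP k
  calc (P k)⁻¹ * RCLike.re (G k k) * (P k)⁻¹ ≤ (P k)⁻¹ * P k * (P k)⁻¹ := by
        gcongr
        exact hGP k
    _ = (P k)⁻¹ := by rw [inv_mul_cancel₀ hPk.ne', one_mul]

open scoped ComplexOrder

open scoped MatrixOrder in
lemma trace_conjTranspose_mul_mul_same_eq_zero_iff [Fintype m] {G : Matrix n n 𝕜}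
    (hG : G.PosSemidef) (B : Matrix n m 𝕜) : (Bᴴ * G * B).trace = 0 ↔ G * B = 0 := by
  classical
  obtain ⟨Y, rfl⟩ := CStarAlgebra.nonneg_iff_eq_star_mul_self.mp hG.nonneg
  have hgram : Bᴴ * (Yᴴ * Y) * B = (Y * B)ᴴ * (Y * B) := by
    simp only [conjTranspose_mul, Matrix.mul_assoc]
  rw [star_eq_conjTranspose, hgram, trace_conjTranspose_mul_self_eq_zero_iff,
    conjTranspose_mul_self_mul_eq_zero]

variable [DecidableEq n] {G D : Matrix n n 𝕜}

lemma posSemidef_inv_sub_add_mul_mul (hG : G.PosDef) (hD : D.IsHermitian) :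
    (G⁻¹ - 2 • D + D * G * D).PosSemidef := by
  have hB : (G⁻¹ - D).IsHermitian := hG.isHermitian.inv.sub hD
  rw [← inv_sub_mul_mul_inv_sub hG.isUnit]
  simpa only [hB.eq] using hG.posSemidef.conjTranspose_mul_mul_same (G⁻¹ - D)

lemma trace_inv_sub_add_mul_mul_eq_zero_iff (hG : G.PosDef) (hD : D.IsHermitian) :
    (G⁻¹ - 2 • D + D * G * D).trace = 0 ↔ G * D = 1 := by
  have hB : (G⁻¹ - D).IsHermitian := hG.isHermitian.inv.sub hD
  have hdet : IsUnit G.det := (isUnit_iff_isUnit_det G).mp hG.isUnit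
  have htrace := trace_conjTranspose_mul_mul_same_eq_zero_iff hG.posSemidef (G⁻¹ - D)
  rwa [hB.eq, inv_sub_mul_mul_inv_sub hG.isUnit, mul_sub, mul_nonsing_inv G hdet, sub_eq_zero,
    eq_comm (a := 1)] at htrace

lemma re_trace_inv_sub_add_mul_mul (G D : Matrix n n 𝕜) :
    RCLike.re (G⁻¹ - 2 • D + D * G * D).trace =
      RCLike.re G⁻¹.trace - 2 * RCLike.re D.trace + RCLike.re (D * G * D).trace := by
  simp only [two_nsmul, two_mul, trace_add, trace_sub, map_add, map_sub]

lemma two_mul_re_trace_sub_le_re_trace_inv (hG : G.PosDef) (hD : D.IsHermitian) :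
    2 * RCLike.re D.trace - RCLike.re (D * G * D).trace ≤ RCLike.re G⁻¹.trace := by
  have hnonneg : 0 ≤ RCLike.re (G⁻¹ - 2 • D + D * G * D).trace :=
    (RCLike.nonneg_iff.mp (posSemidef_inv_sub_add_mul_mul hG hD).trace_nonneg).1
  linarith [re_trace_inv_sub_add_mul_mul G D]

lemma re_trace_inv_eq_two_mul_re_trace_sub_iff (hG : G.PosDef) (hD : D.IsHermitian) :
    RCLike.re G⁻¹.trace = 2 * RCLike.re D.trace - RCLike.re (D * G * D).trace ↔ G * D = 1 := by
  have him : RCLike.im (G⁻¹ - 2 • D + D * G * D).trace = 0 :=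
    (RCLike.nonneg_iff.mp (posSemidef_inv_sub_add_mul_mul hG hD).trace_nonneg).2
  rw [← trace_inv_sub_add_mul_mul_eq_zero_iff hG hD, RCLike.ext_iff (K := 𝕜), map_zero, map_zero,
    and_iff_left him, re_trace_inv_sub_add_mul_mul]
  constructor <;> intro h <;> linarith

theorem stmt1_general (hG : G.PosDef) {P : n → ℝ} (hGP : ∀ k, RCLike.re (G k k) ≤ P k) :
    ∑ k, (P k)⁻¹ ≤ RCLike.re G⁻¹.trace ∧
      (RCLike.re G⁻¹.trace = ∑ k, (P k)⁻¹ ↔ G = diagonal fun k => (P k : 𝕜)) := by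
  have hP (k : n) : 0 < P k := (RCLike.pos_iff.mp hG.diag_pos).1.trans_le (hGP k)
  set D : Matrix n n 𝕜 := diagonal fun k => ((P k)⁻¹ : ℝ) with hD_def
  have hD : D.IsHermitian := isHermitian_diagonal_of_self_adjoint _ <|
    funext fun k => RCLike.conj_ofReal _
  have hGD : G * D = 1 ↔ G = diagonal fun k => (P k : 𝕜) := by
    rw [mul_diagonal_eq_one_iff fun k => RCLike.ofReal_ne_zero.mpr (inv_ne_zero (hP k).ne')]
    simp only [← RCLike.ofReal_inv, inv_inv]
  have htrD : RCLike.re D.trace = ∑ k, (P k)⁻¹ := by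
    simp only [hD_def, trace_diagonal, map_sum, RCLike.ofReal_re]
  have htrDGD : RCLike.re (D * G * D).trace ≤ ∑ k, (P k)⁻¹ :=
    re_trace_diagonal_inv_mul_mul_diagonal_inv_le hP hGP
  have hgap := two_mul_re_trace_sub_le_re_trace_inv hG hD
  refine ⟨by linarith, fun h => ?_, fun h => ?_⟩
  · exact hGD.mp ((re_trace_inv_eq_two_mul_re_trace_sub_iff hG hD).mp (by linarith))
  · rw [inv_eq_right_inv (hGD.mpr h), htrD]

end RCLike

/-- Theorem 1: under per-row power constraints `‖x_k‖² ≤ P_k`, the trace of the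
inverse of `X Xᴴ` is at least `∑ 1/P_k`, with equality iff `X Xᴴ = diag(P)`. -/
theorem stmt1 (K τ : ℕ) (hK : 0 < K) (hKτ : K ≤ τ)
    (P : Fin K → ℝ) (hP : ∀ k, 0 < P k)
    (X : Matrix (Fin K) (Fin τ) ℂ)
    (hpow : ∀ k, ∑ j, ‖X k j‖ ^ 2 ≤ P k)
    (hX : IsUnit (X * Xᴴ)) :
    (∑ k, (P k)⁻¹) ≤ (((X * Xᴴ)⁻¹).trace).re ∧
      ((((X * Xᴴ)⁻¹).trace).re = ∑ k, (P k)⁻¹ ↔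
        X * Xᴴ = Matrix.diagonal fun k => (P k : ℂ)) := by
  open scoped ComplexOrder in
  exact stmt1_general ((posSemidef_self_mul_conjTranspose X).posDef_iff_isUnit.mpr hX)
    fun k => (re_self_mul_conjTranspose_apply_self X k).trans_le (hpow k)
end

section
/- (Proposition 1) Let V and V_0 be (M+1)×B complex matrices such that V V^H and V_0 V_0^H are invertible, and suppose Tr[(V V^H)^{-1}] ≤ Tr[(V_0 V_0^H)^{-1}]. Define λ_1 = 3 (Tr[(V_0 V_0^H)^{-1}])², A_0 = − V_0^H (V_0 V_0^H)^{-2} − λ_1 V_0^H, and Const(V_0) = Tr[(V_0 V_0^H)^{-1}] + λ_1 Tr[V_0 V_0^H] + 2 Tr[V_0^H (V_0 V_0^H)^{-2} V_0]. Then Tr[(V V^H)^{-1}] ≤ λ_1 Tr[V V^H] + 2 Re{Tr[A_0 V]} + Const(V_0). -/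
open Matrix

/-!
Write `V⁺ = Vᴴ (V Vᴴ)⁻¹`, `P₀ = (V₀ V₀ᴴ)⁻¹` and `Δ = V - V₀`. Then `Tr[(V Vᴴ)⁻¹] = ‖V⁺‖²` in the
Frobenius norm, and the first-order expansion of this function at `V₀` has the exact remainder
`‖R‖² - ‖Δᴴ P₀‖²` with `R = Vᴴ P₀ - V⁺`. Moreover `R = V⁺ V (Δᴴ P₀) + V⁺ Δ V₀⁺`, and `V⁺ V` is an
orthogonal projection, so `‖R‖ ≤ ‖Δᴴ P₀‖ + ‖V⁺ Δ V₀⁺‖`. On squaring, `‖Δᴴ P₀‖²` cancels and every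
term left is at most a multiple of `‖Δ‖²`.
-/

section Frobenius

attribute [local instance] Matrix.frobeniusNormedAddCommGroup

variable {𝕜 m n : Type*} [RCLike 𝕜] [Fintype m] [Fintype n]

theorem frobenius_norm_sq_eq_re_trace (A : Matrix m n 𝕜) :
    ‖A‖ ^ 2 = RCLike.re (Aᴴ * A).trace := by
  have norm_eq_sqrt : ‖A‖ = √(∑ i, ∑ j, ‖A i j‖ ^ 2) := by
    simp only [frobenius_norm_def, Real.sqrt_eq_rpow, Real.rpow_two]
  rw [norm_eq_sqrt, Real.sq_sqrt (by positivity), Finset.sum_comm]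
  simp only [trace, diag_apply, mul_apply, conjTranspose_apply, map_sum, RCLike.star_def,
    RCLike.conj_mul, ← RCLike.ofReal_pow, RCLike.ofReal_re]

theorem re_trace_conjTranspose (A : Matrix n n 𝕜) :
    RCLike.re Aᴴ.trace = RCLike.re A.trace := by
  rw [trace_conjTranspose, RCLike.star_def, RCLike.conj_re]

theorem frobenius_norm_sub_sq (A B : Matrix m n 𝕜) :
    ‖A - B‖ ^ 2 = ‖A‖ ^ 2 - 2 * RCLike.re (Aᴴ * B).trace + ‖B‖ ^ 2 := by
  have cross_symm : RCLike.re (Bᴴ * A).trace = RCLike.re (Aᴴ * B).trace := by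
    rw [← re_trace_conjTranspose, conjTranspose_mul, conjTranspose_conjTranspose]
  simp only [frobenius_norm_sq_eq_re_trace, conjTranspose_sub, Matrix.sub_mul, Matrix.mul_sub,
    trace_sub, map_sub, cross_symm]
  ring

theorem frobenius_norm_mul_le_of_isStarProjection {Q : Matrix m m 𝕜} (hQ : IsStarProjection Q)
    (Z : Matrix m n 𝕜) : ‖Q * Z‖ ≤ ‖Z‖ := by
  have cross : RCLike.re (Zᴴ * (Q * Z)).trace = ‖Q * Z‖ ^ 2 := by
    have hQH : Qᴴ = Q := hQ.isSelfAdjoint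
    have hQQ : Q * Q = Q := hQ.isIdempotentElem
    rw [frobenius_norm_sq_eq_re_trace, conjTranspose_mul, hQH, Matrix.mul_assoc,
      ← Matrix.mul_assoc Q Q, hQQ]
  have pythagoras : ‖Z - Q * Z‖ ^ 2 = ‖Z‖ ^ 2 - ‖Q * Z‖ ^ 2 := by
    rw [frobenius_norm_sub_sq, cross]
    ring
  exact (sq_le_sq₀ (norm_nonneg _) (norm_nonneg _)).1
    (sub_nonneg.1 (pythagoras ▸ sq_nonneg ‖Z - Q * Z‖))

end Frobenius

section RightPseudoinverse

variable {𝕜 m n : Type*} [RCLike 𝕜] [Fintype m] [DecidableEq m] [Fintype n]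

/-- The Moore–Penrose right inverse `V⁺ = Vᴴ (V Vᴴ)⁻¹` of a matrix of full row rank, through which
the objective becomes `Tr[(V Vᴴ)⁻¹] = ‖V⁺‖²`. Full row rank is expressed as `IsUnit (V * Vᴴ)`; when
this fails, the matrix inverse, and with it `V⁺`, is `0`. -/
noncomputable def rightPinv (V : Matrix m n 𝕜) : Matrix n m 𝕜 :=
  Vᴴ * (V * Vᴴ)⁻¹

theorem conjTranspose_inv_gram (V : Matrix m n 𝕜) : ((V * Vᴴ)⁻¹)ᴴ = (V * Vᴴ)⁻¹ :=
  (isHermitian_mul_conjTranspose_self V).inv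

open scoped ComplexOrder in
theorem re_trace_inv_gram_nonneg (V : Matrix m n 𝕜) : 0 ≤ RCLike.re (V * Vᴴ)⁻¹.trace :=
  (RCLike.nonneg_iff.1 (posSemidef_self_mul_conjTranspose V).inv.trace_nonneg).1

theorem conjTranspose_rightPinv (V : Matrix m n 𝕜) : (rightPinv V)ᴴ = (V * Vᴴ)⁻¹ * V := by
  rw [rightPinv, conjTranspose_mul, conjTranspose_conjTranspose, conjTranspose_inv_gram]

variable {V V₀ : Matrix m n 𝕜}

theorem mul_rightPinv (hV : IsUnit (V * Vᴴ)) : V * rightPinv V = 1 := by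
  rw [rightPinv, ← Matrix.mul_assoc, mul_nonsing_inv _ ((isUnit_iff_isUnit_det _).1 hV)]

theorem conjTranspose_rightPinv_mul_self (hV : IsUnit (V * Vᴴ)) :
    (rightPinv V)ᴴ * rightPinv V = (V * Vᴴ)⁻¹ := by
  rw [conjTranspose_rightPinv, Matrix.mul_assoc, mul_rightPinv hV, Matrix.mul_one]

theorem isStarProjection_rightPinv_mul (hV : IsUnit (V * Vᴴ)) :
    IsStarProjection (rightPinv V * V) where
  isIdempotentElem := by
    rw [IsIdempotentElem, Matrix.mul_assoc, ← Matrix.mul_assoc V, mul_rightPinv hV, Matrix.one_mul]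
  isSelfAdjoint := by
    rw [IsSelfAdjoint, star_eq_conjTranspose, conjTranspose_mul, conjTranspose_rightPinv, rightPinv,
      Matrix.mul_assoc]

theorem rightPinv_mul_mul_conjTranspose (hV : IsUnit (V * Vᴴ)) :
    rightPinv V * V * Vᴴ = Vᴴ := by
  rw [Matrix.mul_assoc, rightPinv, Matrix.mul_assoc,
    nonsing_inv_mul _ ((isUnit_iff_isUnit_det _).1 hV), Matrix.mul_one]

theorem conjTranspose_mul_inv_gram_sub_rightPinv (hV : IsUnit (V * Vᴴ))
    (hV₀ : IsUnit (V₀ * V₀ᴴ)) :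
    Vᴴ * (V₀ * V₀ᴴ)⁻¹ - rightPinv V =
      rightPinv V * V * ((V - V₀)ᴴ * (V₀ * V₀ᴴ)⁻¹) +
        rightPinv V * (V - V₀) * rightPinv V₀ := by
  have projected : rightPinv V * V * ((V - V₀)ᴴ * (V₀ * V₀ᴴ)⁻¹) =
      Vᴴ * (V₀ * V₀ᴴ)⁻¹ - rightPinv V * V * rightPinv V₀ := by
    rw [conjTranspose_sub, Matrix.sub_mul, Matrix.mul_sub, ← Matrix.mul_assoc _ Vᴴ,
      rightPinv_mul_mul_conjTranspose hV, rightPinv.eq_def V₀]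
  have sandwiched : rightPinv V * (V - V₀) * rightPinv V₀ =
      rightPinv V * V * rightPinv V₀ - rightPinv V := by
    rw [Matrix.mul_sub, Matrix.sub_mul, Matrix.mul_assoc _ V₀, mul_rightPinv hV₀, Matrix.mul_one]
  rw [projected, sandwiched, sub_add_sub_cancel]

attribute [local instance] Matrix.frobeniusNormedAddCommGroup

theorem frobenius_norm_rightPinv_sq (hV : IsUnit (V * Vᴴ)) :
    ‖rightPinv V‖ ^ 2 = RCLike.re (V * Vᴴ)⁻¹.trace := by
  rw [frobenius_norm_sq_eq_re_trace, conjTranspose_rightPinv_mul_self hV]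

theorem frobenius_norm_inv_gram_le (hV : IsUnit (V * Vᴴ)) :
    ‖(V * Vᴴ)⁻¹‖ ≤ ‖rightPinv V‖ ^ 2 :=
  calc ‖(V * Vᴴ)⁻¹‖ = ‖(rightPinv V)ᴴ * rightPinv V‖ := by
        rw [conjTranspose_rightPinv_mul_self hV]
    _ ≤ ‖(rightPinv V)ᴴ‖ * ‖rightPinv V‖ := frobenius_norm_mul _ _
    _ = ‖rightPinv V‖ ^ 2 := by rw [frobenius_norm_conjTranspose, sq]

theorem re_trace_inv_gram_eq_taylor (hV : IsUnit (V * Vᴴ)) (hV₀ : IsUnit (V₀ * V₀ᴴ)) :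
    RCLike.re (V * Vᴴ)⁻¹.trace =
      RCLike.re (V₀ * V₀ᴴ)⁻¹.trace -
        2 * RCLike.re (V₀ᴴ * ((V₀ * V₀ᴴ)⁻¹ * (V₀ * V₀ᴴ)⁻¹) * (V - V₀)).trace +
        (‖Vᴴ * (V₀ * V₀ᴴ)⁻¹ - rightPinv V‖ ^ 2 - ‖(V - V₀)ᴴ * (V₀ * V₀ᴴ)⁻¹‖ ^ 2) := by
  set P₀ := (V₀ * V₀ᴴ)⁻¹ with hP₀
  have cross_rightPinv : ((Vᴴ * P₀)ᴴ * rightPinv V).trace = P₀.trace := by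
    rw [conjTranspose_mul, conjTranspose_conjTranspose, hP₀, conjTranspose_inv_gram,
      Matrix.mul_assoc, mul_rightPinv hV, Matrix.mul_one]
  have cross_base (W : Matrix m n 𝕜) :
      ((Wᴴ * P₀)ᴴ * (V₀ᴴ * P₀)).trace = (V₀ᴴ * (P₀ * P₀) * W).trace := by
    rw [conjTranspose_mul, conjTranspose_conjTranspose, hP₀, conjTranspose_inv_gram,
      Matrix.mul_assoc, trace_mul_comm, Matrix.mul_assoc W, trace_mul_comm W]
    simp only [Matrix.mul_assoc]
  have norm_sq_base : ‖V₀ᴴ * P₀‖ ^ 2 = RCLike.re P₀.trace := frobenius_norm_rightPinv_sq hV₀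
  have gradient_at_base : RCLike.re (V₀ᴴ * (P₀ * P₀) * V₀).trace = RCLike.re P₀.trace := by
    rw [← cross_base, ← frobenius_norm_sq_eq_re_trace, norm_sq_base]
  rw [frobenius_norm_sub_sq, cross_rightPinv, frobenius_norm_rightPinv_sq hV, conjTranspose_sub,
    Matrix.sub_mul, frobenius_norm_sub_sq, cross_base, norm_sq_base, Matrix.mul_sub, trace_sub,
    map_sub, gradient_at_base]
  ring

theorem taylor_remainder_le (hV : IsUnit (V * Vᴴ)) (hV₀ : IsUnit (V₀ * V₀ᴴ)) :
    ‖Vᴴ * (V₀ * V₀ᴴ)⁻¹ - rightPinv V‖ ^ 2 - ‖(V - V₀)ᴴ * (V₀ * V₀ᴴ)⁻¹‖ ^ 2 ≤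
      (2 * ‖rightPinv V₀‖ ^ 2 * (‖rightPinv V‖ * ‖rightPinv V₀‖) +
        (‖rightPinv V‖ * ‖rightPinv V₀‖) ^ 2) * ‖V - V₀‖ ^ 2 := by
  set a := ‖(V - V₀)ᴴ * (V₀ * V₀ᴴ)⁻¹‖
  set b := ‖rightPinv V * (V - V₀) * rightPinv V₀‖
  set ρ := ‖rightPinv V‖ * ‖rightPinv V₀‖
  set d := ‖V - V₀‖
  have residual_le : ‖Vᴴ * (V₀ * V₀ᴴ)⁻¹ - rightPinv V‖ ≤ a + b := by
    rw [conjTranspose_mul_inv_gram_sub_rightPinv hV hV₀]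
    exact norm_add_le_of_le
      (frobenius_norm_mul_le_of_isStarProjection (isStarProjection_rightPinv_mul hV) _) le_rfl
  have a_le : a ≤ ‖rightPinv V₀‖ ^ 2 * d :=
    calc a ≤ ‖(V - V₀)ᴴ‖ * ‖(V₀ * V₀ᴴ)⁻¹‖ := frobenius_norm_mul _ _
      _ ≤ d * ‖rightPinv V₀‖ ^ 2 := by
        rw [frobenius_norm_conjTranspose]
        gcongr
        exact frobenius_norm_inv_gram_le hV₀
      _ = ‖rightPinv V₀‖ ^ 2 * d := mul_comm _ _
  have b_le : b ≤ ρ * d :=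
    calc b ≤ ‖rightPinv V * (V - V₀)‖ * ‖rightPinv V₀‖ := frobenius_norm_mul _ _
      _ ≤ ‖rightPinv V‖ * d * ‖rightPinv V₀‖ := by
        gcongr
        exact frobenius_norm_mul _ _
      _ = ρ * d := mul_right_comm _ _ _
  calc ‖Vᴴ * (V₀ * V₀ᴴ)⁻¹ - rightPinv V‖ ^ 2 - a ^ 2 ≤ (a + b) ^ 2 - a ^ 2 := by gcongr
    _ = 2 * a * b + b ^ 2 := by ring
    _ ≤ 2 * (‖rightPinv V₀‖ ^ 2 * d) * (ρ * d) + (ρ * d) ^ 2 := by gcongr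
    _ = (2 * ‖rightPinv V₀‖ ^ 2 * ρ + ρ ^ 2) * d ^ 2 := by ring

theorem re_trace_inv_gram_le_quadratic (hV : IsUnit (V * Vᴴ)) (hV₀ : IsUnit (V₀ * V₀ᴴ)) :
    RCLike.re (V * Vᴴ)⁻¹.trace ≤
      RCLike.re (V₀ * V₀ᴴ)⁻¹.trace -
        2 * RCLike.re (V₀ᴴ * ((V₀ * V₀ᴴ)⁻¹ * (V₀ * V₀ᴴ)⁻¹) * (V - V₀)).trace +
        (2 * RCLike.re (V₀ * V₀ᴴ)⁻¹.trace *
            √(RCLike.re (V * Vᴴ)⁻¹.trace * RCLike.re (V₀ * V₀ᴴ)⁻¹.trace) +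
          RCLike.re (V * Vᴴ)⁻¹.trace * RCLike.re (V₀ * V₀ᴴ)⁻¹.trace) * ‖V - V₀‖ ^ 2 := by
  have sqrt_eq : √(RCLike.re (V * Vᴴ)⁻¹.trace * RCLike.re (V₀ * V₀ᴴ)⁻¹.trace) =
      ‖rightPinv V‖ * ‖rightPinv V₀‖ := by
    rw [← frobenius_norm_rightPinv_sq hV, ← frobenius_norm_rightPinv_sq hV₀, ← mul_pow,
      Real.sqrt_sq (by positivity)]
  have remainder_le := taylor_remainder_le hV hV₀
  rw [mul_pow, ← sqrt_eq, frobenius_norm_rightPinv_sq hV,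
    frobenius_norm_rightPinv_sq hV₀] at remainder_le
  linarith only [re_trace_inv_gram_eq_taylor hV hV₀, remainder_le]

theorem stmt3_general (V V₀ : Matrix m n 𝕜) (hV : IsUnit (V * Vᴴ)) (hV₀ : IsUnit (V₀ * V₀ᴴ))
    (lam1 : ℝ)
    (hlam : 2 * RCLike.re (V₀ * V₀ᴴ)⁻¹.trace *
        √(RCLike.re (V * Vᴴ)⁻¹.trace * RCLike.re (V₀ * V₀ᴴ)⁻¹.trace) +
      RCLike.re (V * Vᴴ)⁻¹.trace * RCLike.re (V₀ * V₀ᴴ)⁻¹.trace ≤ lam1)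
    (A₀ : Matrix n m 𝕜)
    (hA₀ : A₀ = -(V₀ᴴ * ((V₀ * V₀ᴴ)⁻¹ * (V₀ * V₀ᴴ)⁻¹)) - (lam1 : 𝕜) • V₀ᴴ)
    (C : ℝ)
    (hC : C = RCLike.re (V₀ * V₀ᴴ)⁻¹.trace + lam1 * RCLike.re (V₀ * V₀ᴴ).trace +
      2 * RCLike.re (V₀ᴴ * ((V₀ * V₀ᴴ)⁻¹ * (V₀ * V₀ᴴ)⁻¹) * V₀).trace) :
    RCLike.re (V * Vᴴ)⁻¹.trace ≤
      lam1 * RCLike.re (V * Vᴴ).trace + 2 * RCLike.re (A₀ * V).trace + C := by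
  have dist_sq : ‖V - V₀‖ ^ 2 = RCLike.re (V * Vᴴ).trace - 2 * RCLike.re (V₀ᴴ * V).trace +
      RCLike.re (V₀ * V₀ᴴ).trace := by
    rw [← norm_neg, neg_sub, frobenius_norm_sub_sq, frobenius_norm_sq_eq_re_trace,
      frobenius_norm_sq_eq_re_trace, trace_mul_comm V, trace_mul_comm V₀]
    ring
  have linear_term : RCLike.re (A₀ * V).trace =
      -RCLike.re (V₀ᴴ * ((V₀ * V₀ᴴ)⁻¹ * (V₀ * V₀ᴴ)⁻¹) * V).trace -
        lam1 * RCLike.re (V₀ᴴ * V).trace := by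
    rw [hA₀, Matrix.sub_mul, Matrix.neg_mul, Matrix.smul_mul, trace_sub, trace_neg, trace_smul,
      map_sub, map_neg, smul_eq_mul, RCLike.re_ofReal_mul]
  have quadratic_le := re_trace_inv_gram_le_quadratic hV hV₀
  rw [Matrix.mul_sub, trace_sub, map_sub] at quadratic_le
  have curvature_le := mul_le_mul_of_nonneg_right hlam (sq_nonneg ‖V - V₀‖)
  rw [hC, linear_term]
  linarith only [quadratic_le, curvature_le, congrArg (lam1 * ·) dist_sq]

end RightPseudoinverse

theorem curvature_le_three_mul_sq {t t₀ : ℝ} (ht₀ : 0 ≤ t₀) (hle : t ≤ t₀) :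
    2 * t₀ * √(t * t₀) + t * t₀ ≤ 3 * t₀ ^ 2 := by
  have mul_le : t * t₀ ≤ t₀ ^ 2 := by
    rw [sq]
    gcongr
  have sqrt_le : √(t * t₀) ≤ t₀ := Real.sqrt_le_iff.2 ⟨ht₀, mul_le⟩
  linarith only [mul_le, mul_le_mul_of_nonneg_left sqrt_le ht₀]

/-- Proposition 1: the MM surrogate upper bound for the LS objective
`f(V) = Tr[(V Vᴴ)⁻¹]` around the previous iterate `V₀`. -/
theorem stmt3 (M B : ℕ) (V V0 : Matrix (Fin (M + 1)) (Fin B) ℂ)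
    (hV : IsUnit (V * Vᴴ)) (hV0 : IsUnit (V0 * V0ᴴ))
    (hle : (((V * Vᴴ)⁻¹).trace).re ≤ (((V0 * V0ᴴ)⁻¹).trace).re)
    (lam1 : ℝ) (hlam : lam1 = 3 * ((((V0 * V0ᴴ)⁻¹).trace).re) ^ 2)
    (A0 : Matrix (Fin B) (Fin (M + 1)) ℂ)
    (hA0 : A0 = -(V0ᴴ * ((V0 * V0ᴴ)⁻¹ * (V0 * V0ᴴ)⁻¹)) - (lam1 : ℂ) • V0ᴴ)
    (C : ℝ)
    (hC : C = (((V0 * V0ᴴ)⁻¹).trace).re + lam1 * ((V0 * V0ᴴ).trace).re +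
        2 * ((V0ᴴ * ((V0 * V0ᴴ)⁻¹ * (V0 * V0ᴴ)⁻¹) * V0).trace).re) :
    (((V * Vᴴ)⁻¹).trace).re ≤
      lam1 * ((V * Vᴴ).trace).re + 2 * ((A0 * V).trace).re + C :=
  stmt3_general V V0 hV hV0 lam1
    (hlam ▸ curvature_le_three_mul_sq (re_trace_inv_gram_nonneg V0) hle) A0 hA0 C hC
end

section
/- Let V be an (M+1)×B complex matrix with full row rank, so that W = V V^H is Hermitian positive definite. Define the B(M+1) × B(M+1) matrix P = (V^T (W^{-2})^T V^*) ⊗ W^{-1} + (V^T (W^{-1})^T V^*) ⊗ W^{-2} − I_B ⊗ W^{-2}, where V^* is the entrywise complex conjugate of V. Then P is Hermitian and its largest eigenvalue satisfies λ_max(P) ≤ (λ_max(W^{-1}))². -/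
open Matrix Kronecker
open scoped ComplexOrder

/-- The largest eigenvalue of a Hermitian matrix. -/
noncomputable def lamMax {n : Type*} [Fintype n] [DecidableEq n]
    {A : Matrix n n ℂ} (hA : A.IsHermitian) : ℝ :=
  ⨆ i, hA.eigenvalues i

/-! Write `A = (V Vᴴ)⁻¹` and `c = λ_max(A)`. Up to transposition, the first Kronecker factors of `P`
are `Vᴴ A² V`, the orthogonal projection `Vᴴ A V` onto the row space of `V`, and `1`. Hence the
second and third terms of `P` have a sum `≤ 0` in the Loewner order, so `P ≤ (Vᴴ A² V)ᵀ ⊗ A`.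
Moreover `A² ≤ c A` gives `Vᴴ A² V ≤ c Vᴴ A V ≤ c`, and therefore `P ≤ c ⊗ c = c²`. -/

open scoped MatrixOrder

section Loewner

variable {𝕜 m n : Type*} [RCLike 𝕜]

theorem transpose_le_transpose {A B : Matrix n n 𝕜} (h : A ≤ B) : Aᵀ ≤ Bᵀ :=
  PosSemidef.transpose h

theorem conjTranspose_mul_mul_le_conjTranspose_mul_mul [Fintype m] [Finite n]
    {A B : Matrix m m 𝕜} (h : A ≤ B) (X : Matrix m n 𝕜) : Xᴴ * A * X ≤ Xᴴ * B * X := by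
  simpa only [le_iff, Matrix.mul_sub, Matrix.sub_mul]
    using PosSemidef.conjTranspose_mul_mul_same h X

theorem kronecker_le_kronecker [Finite m] [Finite n] {A B : Matrix m m 𝕜} {C D : Matrix n n 𝕜}
    (hAB : A ≤ B) (hCD : C ≤ D) (hC : 0 ≤ C) (hB : 0 ≤ B) : A ⊗ₖ C ≤ B ⊗ₖ D := by
  have := Fintype.ofFinite m
  have := Fintype.ofFinite n
  have hsum : B ⊗ₖ D - A ⊗ₖ C = (B - A) ⊗ₖ C + B ⊗ₖ (D - C) := by
    ext ⟨i, k⟩ ⟨j, l⟩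
    simp only [Matrix.sub_apply, Matrix.add_apply, kronecker_apply]
    ring
  rw [le_iff, hsum]
  exact (PosSemidef.kronecker hAB hC.posSemidef).add (hB.posSemidef.kronecker hCD)

theorem mul_self_le_smul [Fintype n] [DecidableEq n] {A : Matrix n n 𝕜} {c : ℝ} (hA : 0 ≤ A)
    (hAc : A ≤ c • 1) : A * A ≤ c • A := by
  have hcomm : Commute A (c • 1 - A) :=
    ((Commute.one_right A).smul_right c).sub_right (Commute.refl A)
  have hnonneg : 0 ≤ A * (c • 1 - A) := hcomm.mul_nonneg hA (sub_nonneg.2 hAc)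
  simpa only [Matrix.mul_sub, Matrix.mul_smul, Matrix.mul_one, sub_nonneg] using hnonneg

end Loewner

section LamMax

variable {n : Type*} [Fintype n] [DecidableEq n] {A : Matrix n n ℂ}

theorem le_lamMax_smul_one (hA : A.IsHermitian) : A ≤ lamMax hA • 1 := by
  rw [← Algebra.algebraMap_eq_smul_one, le_algebraMap_iff_spectrum_le hA.isSelfAdjoint,
    hA.spectrum_real_eq_range_eigenvalues, Set.forall_mem_range]
  exact le_ciSup (Set.finite_range _).bddAbove

theorem lamMax_le (hA : A.IsHermitian) {c : ℝ} (hc : 0 ≤ c) (hAc : A ≤ c • 1) :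
    lamMax hA ≤ c := by
  rw [← Algebra.algebraMap_eq_smul_one, le_algebraMap_iff_spectrum_le hA.isSelfAdjoint,
    hA.spectrum_real_eq_range_eigenvalues, Set.forall_mem_range] at hAc
  exact Real.iSup_le hAc hc

theorem lamMax_nonneg (hA : A.IsHermitian) (hA₀ : 0 ≤ A) : 0 ≤ lamMax hA :=
  Real.iSup_nonneg hA₀.posSemidef.eigenvalues_nonneg

end LamMax

section GeneralizedInverse

variable {𝕜 m b : Type*} [RCLike 𝕜] [Fintype m] [Fintype b] {V : Matrix m b 𝕜} {A : Matrix m m 𝕜}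

theorem nonneg_of_mul_gram_mul_self (hA : A.IsHermitian) (hAV : A * (V * Vᴴ) * A = A) :
    0 ≤ A := by
  have hgram : A = A * V * (A * V)ᴴ := by
    rw [conjTranspose_mul, hA.eq, ← Matrix.mul_assoc, Matrix.mul_assoc A V, hAV]
  rw [hgram]
  exact (posSemidef_self_mul_conjTranspose (A * V)).nonneg

theorem isStarProjection_conjTranspose_mul_mul (hA : A.IsHermitian)
    (hAV : A * (V * Vᴴ) * A = A) : IsStarProjection (Vᴴ * A * V) where
  isIdempotentElem := calc
    Vᴴ * A * V * (Vᴴ * A * V) = Vᴴ * (A * (V * Vᴴ) * A) * V := by simp only [Matrix.mul_assoc]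
    _ = Vᴴ * A * V := by rw [hAV]
  isSelfAdjoint := isHermitian_conjTranspose_mul_mul V hA

variable [DecidableEq b]

theorem conjTranspose_mul_mul_le_one (hA : A.IsHermitian) (hAV : A * (V * Vᴴ) * A = A) :
    Vᴴ * A * V ≤ 1 :=
  (isStarProjection_conjTranspose_mul_mul hA hAV).le_one

theorem conjTranspose_mul_mul_self_mul_le [DecidableEq m] {c : ℝ} (hA : A.IsHermitian)
    (hAV : A * (V * Vᴴ) * A = A) (hc : 0 ≤ c) (hAc : A ≤ c • 1) :
    Vᴴ * (A * A) * V ≤ c • 1 := calc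
  Vᴴ * (A * A) * V ≤ Vᴴ * (c • A) * V :=
    conjTranspose_mul_mul_le_conjTranspose_mul_mul
      (mul_self_le_smul (nonneg_of_mul_gram_mul_self hA hAV) hAc) V
  _ = c • (Vᴴ * A * V) := by rw [Matrix.mul_smul, Matrix.smul_mul]
  _ ≤ c • 1 := smul_le_smul_of_nonneg_left (conjTranspose_mul_mul_le_one hA hAV) hc

end GeneralizedInverse

section HessianBlock

variable {𝕜 m b : Type*} [RCLike 𝕜] [Fintype m] [DecidableEq b]

/-- The block `P` of the complex Hessian of `V ↦ Tr[(V Vᴴ)⁻¹]`, with an arbitrary matrix `A` in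
the place of `(V Vᴴ)⁻¹`. -/
def hessianBlock (V : Matrix m b 𝕜) (A : Matrix m m 𝕜) : Matrix (b × m) (b × m) 𝕜 :=
  (Vᵀ * (A * A)ᵀ * V.map (starRingEnd 𝕜)) ⊗ₖ A + (Vᵀ * Aᵀ * V.map (starRingEnd 𝕜)) ⊗ₖ (A * A)
    - (1 : Matrix b b 𝕜) ⊗ₖ (A * A)

theorem hessianBlock_eq (V : Matrix m b 𝕜) (A : Matrix m m 𝕜) :
    hessianBlock V A = (Vᴴ * (A * A) * V)ᵀ ⊗ₖ A + (Vᴴ * A * V)ᵀ ⊗ₖ (A * A)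
      - (1 : Matrix b b 𝕜) ⊗ₖ (A * A) := by
  have hmap : V.map (starRingEnd 𝕜) = Vᴴᵀ := rfl
  have htranspose (X : Matrix m m 𝕜) : Vᵀ * Xᵀ * V.map (starRingEnd 𝕜) = (Vᴴ * X * V)ᵀ := by
    rw [hmap, transpose_mul, transpose_mul, Matrix.mul_assoc]
  rw [hessianBlock, htranspose, htranspose]

theorem isHermitian_hessianBlock (V : Matrix m b 𝕜) {A : Matrix m m 𝕜} (hA : A.IsHermitian) :
    (hessianBlock V A).IsHermitian := by
  have hAA : (A * A).IsHermitian := by rw [IsHermitian, conjTranspose_mul, hA.eq]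
  have hconj {X : Matrix m m 𝕜} (hX : X.IsHermitian) : (Vᴴ * X * V)ᵀᴴ = (Vᴴ * X * V)ᵀ := by
    simp only [conjTranspose_transpose_eq_transpose_conjTranspose, conjTranspose_mul,
      conjTranspose_conjTranspose, hX.eq, Matrix.mul_assoc]
  rw [hessianBlock_eq, IsHermitian, conjTranspose_sub, conjTranspose_add]
  simp only [conjTranspose_kronecker, conjTranspose_one, hconj hA, hconj hAA, hA.eq, hAA.eq]

variable [Fintype b] {V : Matrix m b 𝕜} {A : Matrix m m 𝕜} {c : ℝ}

theorem hessianBlock_le_kronecker (hA : A.IsHermitian) (hAV : A * (V * Vᴴ) * A = A) :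
    hessianBlock V A ≤ (Vᴴ * (A * A) * V)ᵀ ⊗ₖ A := by
  have hproj : (Vᴴ * A * V)ᵀ ≤ 1 := by
    simpa only [transpose_one] using transpose_le_transpose (conjTranspose_mul_mul_le_one hA hAV)
  have hAA : 0 ≤ A * A := hA.isSelfAdjoint.mul_self_nonneg
  rw [hessianBlock_eq, sub_le_iff_le_add]
  gcongr
  exact kronecker_le_kronecker hproj le_rfl hAA zero_le_one

variable [DecidableEq m]

theorem hessianBlock_le_sq_smul_one (hA : A.IsHermitian) (hAV : A * (V * Vᴴ) * A = A)
    (hc : 0 ≤ c) (hAc : A ≤ c • 1) : hessianBlock V A ≤ c ^ 2 • 1 := by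
  have hbound : (Vᴴ * (A * A) * V)ᵀ ≤ c • 1 := by
    simpa only [transpose_smul, transpose_one]
      using transpose_le_transpose (conjTranspose_mul_mul_self_mul_le hA hAV hc hAc)
  calc hessianBlock V A ≤ (Vᴴ * (A * A) * V)ᵀ ⊗ₖ A := hessianBlock_le_kronecker hA hAV
    _ ≤ (c • 1) ⊗ₖ (c • 1) :=
      kronecker_le_kronecker hbound hAc (nonneg_of_mul_gram_mul_self hA hAV)
        (smul_nonneg hc zero_le_one)
    _ = c ^ 2 • 1 := by
      rw [smul_kronecker, kronecker_smul, one_kronecker_one, smul_smul, sq]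

end HessianBlock

theorem posDef_mul_conjTranspose_of_rank_eq_card {𝕜 m b : Type*} [RCLike 𝕜] [Fintype m]
    [Fintype b] {V : Matrix m b 𝕜} (hV : V.rank = Fintype.card m) : (V * Vᴴ).PosDef := by
  have hrows : LinearIndependent 𝕜 V.row :=
    linearIndependent_iff_card_eq_finrank_span.2 (hV.symm.trans V.rank_eq_finrank_span_row)
  exact PosDef.mul_conjTranspose_self V (vecMul_injective_iff.2 hrows)

-- For `V` of any rank, `A` can be the Moore–Penrose inverse of `V Vᴴ`.
theorem stmt4_general {m b : Type*} [Fintype m] [DecidableEq m] [Fintype b] [DecidableEq b]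
    (V : Matrix m b ℂ) {A : Matrix m m ℂ} (hA : A.IsHermitian) (hAV : A * (V * Vᴴ) * A = A) :
    lamMax (isHermitian_hessianBlock V hA) ≤ lamMax hA ^ 2 :=
  lamMax_le _ (sq_nonneg _) <| hessianBlock_le_sq_smul_one hA hAV
    (lamMax_nonneg hA (nonneg_of_mul_gram_mul_self hA hAV)) (le_lamMax_smul_one hA)

/-- The block `P` of the complex Hessian of `f(V) = Tr[(V Vᴴ)⁻¹]` is Hermitian
with largest eigenvalue at most `λ_max(W⁻¹)²`, where `W = V Vᴴ`. -/
theorem stmt4 (M B : ℕ) (V : Matrix (Fin (M + 1)) (Fin B) ℂ)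
    (hV : V.rank = M + 1)
    (W : Matrix (Fin (M + 1)) (Fin (M + 1)) ℂ) (hW : W = V * Vᴴ)
    (P : Matrix (Fin B × Fin (M + 1)) (Fin B × Fin (M + 1)) ℂ)
    (hP : P = (Vᵀ * (W⁻¹ * W⁻¹)ᵀ * V.map (starRingEnd ℂ)) ⊗ₖ W⁻¹
        + (Vᵀ * (W⁻¹)ᵀ * V.map (starRingEnd ℂ)) ⊗ₖ (W⁻¹ * W⁻¹)
        - (1 : Matrix (Fin B) (Fin B) ℂ) ⊗ₖ (W⁻¹ * W⁻¹)) :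
    W.PosDef ∧
      ∃ (hPh : P.IsHermitian) (hWi : (W⁻¹).IsHermitian),
        lamMax hPh ≤ (lamMax hWi) ^ 2 := by
  subst hW hP
  have hW : (V * Vᴴ).PosDef :=
    posDef_mul_conjTranspose_of_rank_eq_card (hV.trans (Fintype.card_fin _).symm)
  have hinv : (V * Vᴴ)⁻¹ * (V * Vᴴ) * (V * Vᴴ)⁻¹ = (V * Vᴴ)⁻¹ := by
    rw [nonsing_inv_mul _ ((isUnit_iff_isUnit_det _).1 hW.isUnit), Matrix.one_mul]
  exact ⟨hW, isHermitian_hessianBlock V hW.inv.isHermitian, hW.inv.isHermitian,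
    stmt4_general V _ hinv⟩
end

section
/- Let V be an (M+1)×B complex matrix with full row rank, so that W = V V^H is Hermitian positive definite. Define the B(M+1) × B(M+1) matrix Q = ((W^{-2})^T V^*) ⊗ (V^H W^{-1}) + ((W^{-1})^T V^*) ⊗ (V^H W^{-2}), where V^* is the entrywise complex conjugate of V. Then the largest eigenvalue of Q Q^H satisfies (λ_max(Q Q^H))^{1/2} ≤ 2 (λ_max(W^{-1}))². -/
open Matrix Kronecker
open scoped ComplexOrder

/-!
The square root of `λ_max(Q Qᴴ)` is the `ℓ²` operator norm `‖Q‖`, and `λ_max(W⁻¹) = ‖W⁻¹‖`. With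
`C = Vᴴ W⁻¹` one has `Q = (C W⁻¹)ᵀ ⊗ C + Cᵀ ⊗ (C W⁻¹)`. The operator norm is invariant under
transposition and submultiplicative for both the Kronecker and the matrix product, so each summand
has norm at most `‖C‖² ‖W⁻¹‖`. Finally `Cᴴ C = W⁻¹ (V Vᴴ) W⁻¹ = W⁻¹` gives `‖C‖² = ‖W⁻¹‖`.
-/

section

open scoped Matrix.Norms.L2Operator

variable {𝕜 m n p q : Type*} [RCLike 𝕜] [Fintype m] [Fintype n] [Fintype p] [Fintype q]

lemma l2_opNorm_eq_norm_toLin [DecidableEq n] {E F : Type*}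
    [NormedAddCommGroup E] [InnerProductSpace 𝕜 E] [FiniteDimensional 𝕜 E]
    [NormedAddCommGroup F] [InnerProductSpace 𝕜 F]
    (bE : OrthonormalBasis n 𝕜 E) (bF : OrthonormalBasis m 𝕜 F) (A : Matrix m n 𝕜) :
    ‖A‖ = ‖(toLin bE.toBasis bF.toBasis A).toContinuousLinearMap‖ := by
  have toLin_eq_comp : (toLin bE.toBasis bF.toBasis A).toContinuousLinearMap =
      bF.repr.symm.toLinearIsometry.toContinuousLinearMap ∘SL
        ((toEuclideanLin A).toContinuousLinearMap ∘SL (bE.repr : E →L[𝕜] EuclideanSpace 𝕜 n)) := by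
    ext x
    apply bF.repr.injective
    ext i
    have repr_toLin := congr_fun (LinearMap.toMatrix_mulVec_repr bE.toBasis bF.toBasis
      (toLin bE.toBasis bF.toBasis A) x) i
    simpa [mulVec, dotProduct] using repr_toLin.symm
  rw [toLin_eq_comp, LinearIsometry.norm_toContinuousLinearMap_comp,
    ContinuousLinearMap.opNorm_comp_linearIsometryEquiv, l2_opNorm_def, LinearEquiv.trans_apply]

lemma l2_opNorm_kronecker_le [DecidableEq n] [DecidableEq q]
    (A : Matrix m n 𝕜) (B : Matrix p q 𝕜) : ‖A ⊗ₖ B‖ ≤ ‖A‖ * ‖B‖ := by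
  let bm := EuclideanSpace.basisFun m 𝕜
  let bn := EuclideanSpace.basisFun n 𝕜
  let bp := EuclideanSpace.basisFun p 𝕜
  let bq := EuclideanSpace.basisFun q 𝕜
  let f := toLin bn.toBasis bm.toBasis A
  let g := toLin bq.toBasis bp.toBasis B
  calc ‖A ⊗ₖ B‖
      = ‖(TensorProduct.map f g).toContinuousLinearMap‖ := by
        rw [l2_opNorm_eq_norm_toLin (bn.tensorProduct bq) (bm.tensorProduct bp),
          OrthonormalBasis.toBasis_tensorProduct, OrthonormalBasis.toBasis_tensorProduct,
          toLin_kronecker]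
    _ = ‖TensorProduct.mapL f.toContinuousLinearMap g.toContinuousLinearMap‖ := by
        congr 1
        ext x
        simp
    _ ≤ ‖f.toContinuousLinearMap‖ * ‖g.toContinuousLinearMap‖ := TensorProduct.norm_mapL_le _ _
    _ = ‖A‖ * ‖B‖ := by
        rw [← l2_opNorm_eq_norm_toLin bn bm A, ← l2_opNorm_eq_norm_toLin bq bp B]

lemma norm_toLp_star (v : n → 𝕜) : ‖WithLp.toLp 2 (star v)‖ = ‖WithLp.toLp 2 v‖ := by
  simp [EuclideanSpace.norm_eq]

lemma l2_opNorm_map_star_le [DecidableEq n] (A : Matrix m n 𝕜) : ‖A.map star‖ ≤ ‖A‖ := by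
  refine ContinuousLinearMap.opNorm_le_bound _ (norm_nonneg A) fun x ↦ ?_
  have map_star_mulVec : A.map star *ᵥ x = star (A *ᵥ star x.ofLp) := by
    rw [star_mulVec, star_star, ← mulVec_transpose, conjTranspose_transpose]
  calc ‖WithLp.toLp 2 (A.map star *ᵥ x)‖
      = ‖WithLp.toLp 2 (A *ᵥ star x.ofLp)‖ := by rw [map_star_mulVec, norm_toLp_star]
    _ ≤ ‖A‖ * ‖WithLp.toLp 2 (star x.ofLp)‖ := l2_opNorm_mulVec A (WithLp.toLp 2 (star x.ofLp))
    _ = ‖A‖ * ‖x‖ := by rw [norm_toLp_star, WithLp.toLp_ofLp]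

lemma l2_opNorm_transpose [DecidableEq m] [DecidableEq n] (A : Matrix m n 𝕜) : ‖Aᵀ‖ = ‖A‖ := by
  rw [← l2_opNorm_conjTranspose, conjTranspose, transpose_transpose]
  refine le_antisymm (l2_opNorm_map_star_le A) ?_
  simpa [Matrix.map_map, Function.comp_def] using l2_opNorm_map_star_le (A.map star)

lemma l2_opNorm_transpose_kronecker_add_le [DecidableEq m] [DecidableEq n]
    (C : Matrix n m 𝕜) (P : Matrix m m 𝕜) :
    ‖(C * P)ᵀ ⊗ₖ C + Cᵀ ⊗ₖ (C * P)‖ ≤ 2 * (‖C‖ ^ 2 * ‖P‖) := by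
  calc ‖(C * P)ᵀ ⊗ₖ C + Cᵀ ⊗ₖ (C * P)‖
      ≤ ‖(C * P)ᵀ‖ * ‖C‖ + ‖Cᵀ‖ * ‖C * P‖ :=
        norm_add_le_of_le (l2_opNorm_kronecker_le _ _) (l2_opNorm_kronecker_le _ _)
    _ = 2 * (‖C‖ * ‖C * P‖) := by
        rw [l2_opNorm_transpose, l2_opNorm_transpose]
        ring
    _ ≤ 2 * (‖C‖ * (‖C‖ * ‖P‖)) := by
        gcongr
        exact l2_opNorm_mul C P
    _ = 2 * (‖C‖ ^ 2 * ‖P‖) := by ring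

lemma l2_opNorm_conjTranspose_mul_inv_sq [DecidableEq m] {V : Matrix m n 𝕜}
    (hV : IsUnit (V * Vᴴ)) : ‖Vᴴ * (V * Vᴴ)⁻¹‖ ^ 2 = ‖(V * Vᴴ)⁻¹‖ := by
  have gram : (Vᴴ * (V * Vᴴ)⁻¹)ᴴ * (Vᴴ * (V * Vᴴ)⁻¹) = (V * Vᴴ)⁻¹ := by
    rw [conjTranspose_mul, conjTranspose_conjTranspose,
      (isHermitian_mul_conjTranspose_self V).inv.eq, Matrix.mul_assoc, ← Matrix.mul_assoc V,
      mul_nonsing_inv _ ((isUnit_iff_isUnit_det _).mp hV), Matrix.mul_one]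
  rw [sq, ← l2_opNorm_conjTranspose_mul_self, gram]

lemma posDef_mul_conjTranspose_self_of_rank_eq {A : Matrix m n 𝕜} (hA : A.rank = Fintype.card m) :
    (A * Aᴴ).PosDef := by
  refine .mul_conjTranspose_self A (vecMul_injective_iff.mpr ?_)
  rw [linearIndependent_iff_card_eq_finrank_span, Set.finrank, ← rank_eq_finrank_span_row, hA]

lemma l2_opNorm_eq_norm_eigenvalues [DecidableEq n] {A : Matrix n n 𝕜} (hA : A.IsHermitian) :
    ‖A‖ = ‖hA.eigenvalues‖ := by
  conv_lhs => rw [hA.spectral_theorem]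
  rw [Unitary.conjStarAlgAut_apply, ← Unitary.coe_star, CStarRing.norm_mul_coe_unitary,
    CStarRing.norm_coe_unitary_mul, l2_opNorm_diagonal]
  simp [Pi.norm_def]

lemma pi_norm_eq_iSup_of_nonneg {f : n → ℝ} (hf : ∀ i, 0 ≤ f i) : ‖f‖ = ⨆ i, f i := by
  refine le_antisymm ((pi_norm_le_iff_of_nonneg (Real.iSup_nonneg hf)).mpr fun i ↦ ?_)
    (Real.iSup_le (fun i ↦ (Real.le_norm_self _).trans (norm_le_pi_norm f i)) (norm_nonneg f))
  rw [Real.norm_of_nonneg (hf i)]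
  exact le_ciSup (Set.finite_range f).bddAbove i

lemma iSup_eigenvalues_eq_l2_opNorm [DecidableEq n] {A : Matrix n n 𝕜} (hA : A.PosSemidef) :
    ⨆ i, hA.isHermitian.eigenvalues i = ‖A‖ := by
  rw [l2_opNorm_eq_norm_eigenvalues hA.isHermitian,
    pi_norm_eq_iSup_of_nonneg hA.eigenvalues_nonneg]

lemma sqrt_iSup_eigenvalues_mul_conjTranspose_self [DecidableEq m] [DecidableEq n]
    (A : Matrix m n 𝕜) :
    √(⨆ i, (isHermitian_mul_conjTranspose_self A).eigenvalues i) = ‖A‖ := by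
  have norm_mul_self : ‖A * Aᴴ‖ = ‖A‖ * ‖A‖ := by
    simpa only [conjTranspose_conjTranspose, l2_opNorm_conjTranspose] using
      l2_opNorm_conjTranspose_mul_self Aᴴ
  rw [iSup_eigenvalues_eq_l2_opNorm (posSemidef_self_mul_conjTranspose A), norm_mul_self,
    Real.sqrt_mul_self (norm_nonneg A)]

theorem stmt5_general [DecidableEq m] [DecidableEq n] (V : Matrix m n 𝕜)
    (hV : V.rank = Fintype.card m) (W : Matrix m m 𝕜) (hW : W = V * Vᴴ)
    (Q : Matrix (m × n) (n × m) 𝕜)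
    (hQ : Q = ((W⁻¹ * W⁻¹)ᵀ * V.map (starRingEnd 𝕜)) ⊗ₖ (Vᴴ * W⁻¹)
        + ((W⁻¹)ᵀ * V.map (starRingEnd 𝕜)) ⊗ₖ (Vᴴ * (W⁻¹ * W⁻¹))) :
    W.PosDef ∧
      ∃ (hQh : (Q * Qᴴ).IsHermitian) (hWi : (W⁻¹).IsHermitian),
        √(⨆ i, hQh.eigenvalues i) ≤ 2 * (⨆ i, hWi.eigenvalues i) ^ 2 := by
  have hWpos : W.PosDef := hW ▸ posDef_mul_conjTranspose_self_of_rank_eq hV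
  refine ⟨hWpos, isHermitian_mul_conjTranspose_self Q, hWpos.inv.isHermitian, ?_⟩
  rw [sqrt_iSup_eigenvalues_mul_conjTranspose_self,
    iSup_eigenvalues_eq_l2_opNorm hWpos.inv.posSemidef]
  have Q_eq : Q = (Vᴴ * W⁻¹ * W⁻¹)ᵀ ⊗ₖ (Vᴴ * W⁻¹) + (Vᴴ * W⁻¹)ᵀ ⊗ₖ (Vᴴ * W⁻¹ * W⁻¹) := by
    have map_conj : V.map (starRingEnd 𝕜) = Vᴴᵀ := (conjTranspose_transpose V).symm
    rw [hQ, map_conj, ← transpose_mul, ← transpose_mul, Matrix.mul_assoc]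
  have norm_sq : ‖Vᴴ * W⁻¹‖ ^ 2 = ‖W⁻¹‖ := by
    subst hW
    exact l2_opNorm_conjTranspose_mul_inv_sq hWpos.isUnit
  calc ‖Q‖ ≤ 2 * (‖Vᴴ * W⁻¹‖ ^ 2 * ‖W⁻¹‖) := Q_eq ▸ l2_opNorm_transpose_kronecker_add_le _ _
    _ = 2 * ‖W⁻¹‖ ^ 2 := by rw [norm_sq, sq]

end

/-- The off-diagonal Hessian block `Q` of `f(V) = Tr[(V Vᴴ)⁻¹]` satisfies
`λ_max(Q Qᴴ)^{1/2} ≤ 2 λ_max(W⁻¹)²`, where `W = V Vᴴ`. -/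
theorem stmt5 (M B : ℕ) (V : Matrix (Fin (M + 1)) (Fin B) ℂ)
    (hV : V.rank = M + 1)
    (W : Matrix (Fin (M + 1)) (Fin (M + 1)) ℂ) (hW : W = V * Vᴴ)
    (Q : Matrix (Fin (M + 1) × Fin B) (Fin B × Fin (M + 1)) ℂ)
    (hQ : Q = ((W⁻¹ * W⁻¹)ᵀ * V.map (starRingEnd ℂ)) ⊗ₖ (Vᴴ * W⁻¹)
        + ((W⁻¹)ᵀ * V.map (starRingEnd ℂ)) ⊗ₖ (Vᴴ * (W⁻¹ * W⁻¹))) :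
    W.PosDef ∧
      ∃ (hQh : (Q * Qᴴ).IsHermitian) (hWi : (W⁻¹).IsHermitian),
        Real.sqrt (lamMax hQh) ≤ 2 * (lamMax hWi) ^ 2 := by
  exact stmt5_general V (hV.trans (Fintype.card_fin _).symm) W hW Q hQ
end

section
/- (Lemma 1) Let R be an n×n Hermitian positive semidefinite complex matrix, let c > 0, and let S and S_0 be n×m complex matrices. Then S_0^H R S_0 + c I_m and S^H R S + c I_m are invertible, and with Ξ_0 = (S_0^H R S_0 + c I_m)^{-1} S_0^H R it holds that − Tr[R S (S^H R S + c I_m)^{-1} S^H R] ≤ Tr[Ξ_0^H S^H R S Ξ_0] − 2 Re{Tr[Ξ_0 R S]} + c Tr[Ξ_0 Ξ_0^H]. -/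
open Matrix
open scoped ComplexOrder

/-!
Write `A = SᴴRS + cI`, which is positive definite, and `B = SᴴR`. For every `Ξ`, the right-hand side
of the bound minus the left-hand side is the trace of `(Ξ - A⁻¹B)ᴴ A (Ξ - A⁻¹B)`, a positive
semidefinite matrix. The square vanishes at `Ξ = A⁻¹B`, so the bound is tight at `S = S₀` when
`Ξ = Ξ₀`.
-/

section CommRing

variable {m n α : Type*} [Fintype m] [DecidableEq m] [CommRing α] [StarRing α]

lemma conjTranspose_sub_inv_mul_mul_mul_sub_inv_mul {A : Matrix m m α} (hA : A.IsHermitian)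
    (hdet : IsUnit A.det) (B X : Matrix m n α) :
    (X - A⁻¹ * B)ᴴ * A * (X - A⁻¹ * B) =
      Xᴴ * A * X - Xᴴ * B - (Xᴴ * B)ᴴ + Bᴴ * A⁻¹ * B := by
  have left_cancel : (A⁻¹ * B)ᴴ * A = Bᴴ := by
    rw [conjTranspose_mul, hA.inv.eq, nonsing_inv_mul_cancel_right A Bᴴ hdet]
  have right_cancel : Xᴴ * A * (A⁻¹ * B) = Xᴴ * B := by
    rw [Matrix.mul_assoc, mul_nonsing_inv_cancel_left A B hdet]
  calc
    (X - A⁻¹ * B)ᴴ * A * (X - A⁻¹ * B) = (Xᴴ * A - Bᴴ) * (X - A⁻¹ * B) := by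
      rw [conjTranspose_sub, Matrix.sub_mul, left_cancel]
    _ = Xᴴ * A * X - Xᴴ * B - (Bᴴ * X - Bᴴ * A⁻¹ * B) := by
      rw [Matrix.sub_mul, Matrix.mul_sub, Matrix.mul_sub, right_cancel, Matrix.mul_assoc Bᴴ]
    _ = Xᴴ * A * X - Xᴴ * B - (Xᴴ * B)ᴴ + Bᴴ * A⁻¹ * B := by
      rw [conjTranspose_mul, conjTranspose_conjTranspose, sub_add]

end CommRing

section RCLike

variable {m n 𝕜 : Type*} [RCLike 𝕜]

lemma posDef_conjTranspose_mul_mul_add_smul_one [Finite m] [Fintype n] [DecidableEq m]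
    {R : Matrix n n 𝕜} (hR : R.PosSemidef) {c : 𝕜} (hc : 0 < c) (S : Matrix n m 𝕜) :
    (Sᴴ * R * S + c • 1).PosDef :=
  PosDef.posSemidef_add (hR.conjTranspose_mul_mul_same S) (PosDef.one.smul hc)

variable [Fintype m]

lemma neg_re_trace_conjTranspose_mul_inv_mul_le [Fintype n] [DecidableEq m] {A : Matrix m m 𝕜}
    (hA : A.PosDef) (B X : Matrix m n 𝕜) :
    -RCLike.re (Bᴴ * A⁻¹ * B).trace ≤
      RCLike.re (Xᴴ * A * X).trace - 2 * RCLike.re (Xᴴ * B).trace := by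
  have square_nonneg : 0 ≤ RCLike.re ((X - A⁻¹ * B)ᴴ * A * (X - A⁻¹ * B)).trace :=
    (RCLike.nonneg_iff.1 (hA.posSemidef.conjTranspose_mul_mul_same _).trace_nonneg).1
  have hdet : IsUnit A.det := (isUnit_iff_isUnit_det A).1 hA.isUnit
  rw [conjTranspose_sub_inv_mul_mul_mul_sub_inv_mul hA.isHermitian hdet, trace_add, trace_sub,
    trace_sub, trace_conjTranspose, map_add, map_sub, map_sub, RCLike.star_def,
    RCLike.conj_re] at square_nonneg
  linarith

lemma re_trace_conjTranspose_mul [Fintype n] (X Y : Matrix m n 𝕜) :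
    RCLike.re (Xᴴ * Y).trace = RCLike.re (X * Yᴴ).trace := by
  rw [← RCLike.conj_re, ← RCLike.star_def, ← trace_conjTranspose, conjTranspose_mul,
    conjTranspose_conjTranspose, trace_mul_comm]

lemma re_trace_conjTranspose_mul_add_smul_one_mul [Fintype n] [DecidableEq m] (M : Matrix m m 𝕜)
    (c : ℝ) (X : Matrix m n 𝕜) :
    RCLike.re (Xᴴ * (M + (c : 𝕜) • 1) * X).trace =
      RCLike.re (Xᴴ * M * X).trace + c * RCLike.re (X * Xᴴ).trace := by
  rw [Matrix.mul_add, Matrix.add_mul, Matrix.mul_smul, Matrix.mul_one, Matrix.smul_mul, trace_add,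
    trace_smul, smul_eq_mul, map_add, RCLike.re_ofReal_mul, re_trace_conjTranspose_mul]

theorem stmt9_general [Fintype n] [DecidableEq m] {R : Matrix n n 𝕜} (hR : R.PosSemidef) {c : ℝ}
    (hc : 0 < c) (S : Matrix n m 𝕜) (X : Matrix m n 𝕜) :
    IsUnit (Sᴴ * R * S + (c : 𝕜) • 1) ∧
    -RCLike.re (R * S * (Sᴴ * R * S + (c : 𝕜) • 1)⁻¹ * (Sᴴ * R)).trace ≤
      RCLike.re (Xᴴ * (Sᴴ * R * S) * X).trace - 2 * RCLike.re (X * (R * S)).trace +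
        c * RCLike.re (X * Xᴴ).trace := by
  have posDef : (Sᴴ * R * S + (c : 𝕜) • 1).PosDef :=
    posDef_conjTranspose_mul_mul_add_smul_one hR (RCLike.ofReal_pos.2 hc) S
  have adjoint : (Sᴴ * R)ᴴ = R * S := by
    rw [conjTranspose_mul, hR.isHermitian.eq, conjTranspose_conjTranspose]
  have bound := neg_re_trace_conjTranspose_mul_inv_mul_le posDef (Sᴴ * R) X
  rw [re_trace_conjTranspose_mul_add_smul_one_mul, re_trace_conjTranspose_mul X (Sᴴ * R),
    adjoint] at bound
  exact ⟨posDef.isUnit, by linarith⟩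

end RCLike

/-- Lemma 1: the LMMSE objective surrogate. With `Ξ₀ = (S₀ᴴRS₀ + cI)⁻¹S₀ᴴR`,
`−Tr[RS(SᴴRS + cI)⁻¹SᴴR] ≤ Tr[Ξ₀ᴴSᴴRSΞ₀] − 2Re{Tr[Ξ₀RS]} + c·Tr[Ξ₀Ξ₀ᴴ]`. -/
theorem stmt9 (n m : ℕ) (R : Matrix (Fin n) (Fin n) ℂ) (hR : R.PosSemidef)
    (c : ℝ) (hc : 0 < c) (S S0 : Matrix (Fin n) (Fin m) ℂ)
    (Xi0 : Matrix (Fin m) (Fin n) ℂ)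
    (hXi0 : Xi0 = (S0ᴴ * R * S0 + (c : ℂ) • 1)⁻¹ * (S0ᴴ * R)) :
    IsUnit (S0ᴴ * R * S0 + (c : ℂ) • 1) ∧
    IsUnit (Sᴴ * R * S + (c : ℂ) • 1) ∧
    -(((R * S * (Sᴴ * R * S + (c : ℂ) • 1)⁻¹ * (Sᴴ * R)).trace).re) ≤
      ((Xi0ᴴ * (Sᴴ * R * S) * Xi0).trace).re - 2 * ((Xi0 * (R * S)).trace).re +
        c * ((Xi0 * Xi0ᴴ).trace).re :=
  ⟨(stmt9_general hR hc S0 Xi0).1, stmt9_general hR hc S Xi0⟩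
end

section
/- Let A and A_0 be n×n Hermitian positive definite complex matrices and let B and B_0 be m×n complex matrices. Then Tr[B A^{-1} B^H] ≥ 2 Re{Tr[A_0^{-1} B_0^H B]} − Tr[A_0^{-1} B_0^H B_0 A_0^{-1} A]. -/
open Matrix
open scoped ComplexOrder

/-! Completing the square, `(B - C * A) * A⁻¹ * (B - C * A)ᴴ` is the gap between `B * A⁻¹ * Bᴴ` and
its affine minorant `B * Cᴴ + C * Bᴴ - C * A * Cᴴ`, and it is positive semidefinite. The tangent at
`(A₀, B₀)` is the minorant with `C = B₀ * A₀⁻¹`. -/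

section

variable {m n R : Type*} [Fintype n] [DecidableEq n] [CommRing R] [StarRing R]

theorem sub_mul_inv_mul_conjTranspose_sub {A : Matrix n n R} (hA : A.IsHermitian)
    (hu : IsUnit A) (B C : Matrix m n R) :
    (B - C * A) * A⁻¹ * (B - C * A)ᴴ =
      B * A⁻¹ * Bᴴ - (B * Cᴴ + C * Bᴴ - C * A * Cᴴ) := by
  have hdet : IsUnit A.det := (isUnit_iff_isUnit_det A).1 hu
  have hleft : (B - C * A) * A⁻¹ = B * A⁻¹ - C := by
    rw [Matrix.sub_mul, mul_nonsing_inv_cancel_right _ _ hdet]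
  have hright : (B - C * A)ᴴ = Bᴴ - A * Cᴴ := by
    rw [conjTranspose_sub, conjTranspose_mul, hA.eq]
  have hcross : B * A⁻¹ * (A * Cᴴ) = B * Cᴴ := by
    rw [← Matrix.mul_assoc, nonsing_inv_mul_cancel_right _ _ hdet]
  rw [hleft, hright, Matrix.sub_mul, Matrix.mul_sub, Matrix.mul_sub, hcross, ← Matrix.mul_assoc C]
  abel

end

theorem posSemidef_mul_inv_mul_conjTranspose_sub {m n K : Type*} [Finite m] [Fintype n]
    [DecidableEq n] [Field K] [PartialOrder K] [StarRing K] {A : Matrix n n K} (hA : A.PosDef)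
    (B C : Matrix m n K) :
    (B * A⁻¹ * Bᴴ - (B * Cᴴ + C * Bᴴ - C * A * Cᴴ)).PosSemidef := by
  rw [← sub_mul_inv_mul_conjTranspose_sub hA.isHermitian hA.isUnit]
  exact hA.inv.posSemidef.mul_mul_conjTranspose_same _

section

variable {m n 𝕜 : Type*} [Fintype m] [Fintype n] [RCLike 𝕜]

theorem re_trace_mul_conjTranspose_comm (B C : Matrix m n 𝕜) :
    RCLike.re (B * Cᴴ).trace = RCLike.re (C * Bᴴ).trace := by
  rw [← RCLike.conj_re, starRingEnd_apply, ← trace_conjTranspose, conjTranspose_mul,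
    conjTranspose_conjTranspose]

theorem stmt10_general [DecidableEq n] {A : Matrix n n 𝕜} (hA : A.PosDef) (B C : Matrix m n 𝕜) :
    2 * RCLike.re (Cᴴ * B).trace - RCLike.re (Cᴴ * C * A).trace ≤
      RCLike.re (B * A⁻¹ * Bᴴ).trace := by
  have hgap : 0 ≤ RCLike.re (B * A⁻¹ * Bᴴ - (B * Cᴴ + C * Bᴴ - C * A * Cᴴ)).trace :=
    (RCLike.nonneg_iff.1 (posSemidef_mul_inv_mul_conjTranspose_sub hA B C).trace_nonneg).1
  simp only [trace_sub, trace_add, map_sub, map_add,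
    re_trace_mul_conjTranspose_comm C B] at hgap
  rw [trace_mul_comm Cᴴ B, ← trace_mul_cycle C A Cᴴ]
  linarith

end

/-- First-order Taylor lower bound of the jointly convex function
`h(A, B) = Tr[B A⁻¹ Bᴴ]` at the point `(A₀, B₀)`. -/
theorem stmt10 (n m : ℕ) (A A0 : Matrix (Fin n) (Fin n) ℂ)
    (hA : A.PosDef) (hA0 : A0.PosDef)
    (B B0 : Matrix (Fin m) (Fin n) ℂ) :
    2 * ((A0⁻¹ * B0ᴴ * B).trace).re - ((A0⁻¹ * B0ᴴ * B0 * A0⁻¹ * A).trace).re ≤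
      ((B * A⁻¹ * Bᴴ).trace).re := by
  simpa only [conjTranspose_mul, hA0.inv.isHermitian.eq, ← Matrix.mul_assoc,
    RCLike.re_eq_complex_re] using stmt10_general hA B (B0 * A0⁻¹)
end

section
/- The function h(A, B) = Re{Tr[B A^{-1} B^H]} is convex (with respect to the real vector space structure) on the convex set {(A, B) : A is an n×n Hermitian positive definite complex matrix, B is an arbitrary m×n complex matrix}. -/
open Matrix
open scoped ComplexOrder

/-!
By the Schur complement, `B A⁻¹ Bᴴ` is, for positive definite `A`, the smallest `T` in the Loewner
order for which the block matrix `[[A, Bᴴ], [B, T]]` is positive semidefinite. The triples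
`(A, B, T)` with that property form a convex cone, so `(A, B) ↦ B A⁻¹ Bᴴ` has a convex epigraph in
the Loewner order. The real part of the trace is linear and monotone, hence preserves convexity.
-/

theorem convexOn_linearMap_comp {R E β γ : Type*} [Semiring R] [PartialOrder R]
    [AddCommMonoid E] [SMul R E] [AddCommMonoid β] [PartialOrder β] [Module R β]
    [AddCommMonoid γ] [PartialOrder γ] [Module R γ] {s : Set E} {f : E → β}
    (hf : ConvexOn R s f) (g : β →ₗ[R] γ) (hg : Monotone g) : ConvexOn R s (g ∘ f) :=
  ⟨hf.1, fun x hx y hy a b ha hb hab => calc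
    g (f (a • x + b • y)) ≤ g (a • f x + b • f y) := hg (hf.2 hx hy ha hb hab)
    _ = a • g (f x) + b • g (f y) := by rw [map_add, map_smul, map_smul]⟩

theorem convex_setOf_posDef {n R S : Type*} [CommSemiring R] [PartialOrder R]
    [StarRing R] [StarOrderedRing R] [Ring S] [PartialOrder S] [StarRing S] [AddLeftMono S]
    [Algebra R S] [StarModule R S] [PosSMulStrictMono R S] :
    Convex R {A : Matrix n n S | A.PosDef} :=
  convex_iff_forall_pos.2 fun _ hA _ hB _ _ ha hb _ => (hA.smul ha).add (hB.smul hb)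

section LoewnerOrder

open scoped MatrixOrder

variable {𝕜 m n : Type*} [RCLike 𝕜] [Fintype n] [DecidableEq n]

theorem posSemidef_fromBlocks_iff_mul_inv_mul_conjTranspose_le [Finite m]
    {A : Matrix n n 𝕜} (hA : A.PosDef) (B : Matrix m n 𝕜) (T : Matrix m m 𝕜) :
    (fromBlocks A Bᴴ B T).PosSemidef ↔ B * A⁻¹ * Bᴴ ≤ T := by
  have := hA.isUnit.invertible
  simpa only [conjTranspose_conjTranspose, ← Matrix.le_iff] using PosDef.fromBlocks₁₁ Bᴴ T hA

theorem convexOn_mul_inv_mul_conjTranspose [Finite m] :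
    ConvexOn ℝ {p : Matrix n n 𝕜 × Matrix m n 𝕜 | p.1.PosDef}
      (fun p => p.2 * p.1⁻¹ * p.2ᴴ) := by
  have hconv : Convex ℝ {p : Matrix n n 𝕜 × Matrix m n 𝕜 | p.1.PosDef} :=
    have hPosDef : Convex ℝ {A : Matrix n n 𝕜 | A.PosDef} := convex_setOf_posDef
    hPosDef.linear_preimage (LinearMap.fst ℝ _ _)
  refine ⟨hconv, fun p hp q hq a b ha hb hab => ?_⟩
  have posSemidef_block {r : Matrix n n 𝕜 × Matrix m n 𝕜} (hr : r.1.PosDef) :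
      (fromBlocks r.1 r.2ᴴ r.2 (r.2 * r.1⁻¹ * r.2ᴴ)).PosSemidef :=
    (posSemidef_fromBlocks_iff_mul_inv_mul_conjTranspose_le hr _ _).2 le_rfl
  have hsum := ((posSemidef_block hp).smul ha).add ((posSemidef_block hq).smul hb)
  refine (posSemidef_fromBlocks_iff_mul_inv_mul_conjTranspose_le
    (hconv hp hq ha hb hab) _ _).1 ?_
  simpa [fromBlocks_smul, fromBlocks_add] using hsum

theorem stmt11_general [Fintype m] :
    ConvexOn ℝ {p : Matrix n n 𝕜 × Matrix m n 𝕜 | p.1.PosDef}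
      (fun p => RCLike.re (p.2 * p.1⁻¹ * p.2ᴴ).trace) :=
  have htrace : ConvexOn ℝ {p : Matrix n n 𝕜 × Matrix m n 𝕜 | p.1.PosDef}
      (fun p => (p.2 * p.1⁻¹ * p.2ᴴ).trace) :=
    convexOn_linearMap_comp convexOn_mul_inv_mul_conjTranspose (traceLinearMap m ℝ 𝕜)
      (OrderHomClass.mono (tracePositiveLinearMap m ℝ 𝕜))
  convexOn_linearMap_comp htrace RCLike.reLm RCLike.re_monotone

end LoewnerOrder

/-- The function `h(A, B) = Re{Tr[B A⁻¹ Bᴴ]}` is jointly convex on the set of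
pairs `(A, B)` with `A` Hermitian positive definite. -/
theorem stmt11 (n m : ℕ) :
    ConvexOn ℝ
      {p : Matrix (Fin n) (Fin n) ℂ × Matrix (Fin m) (Fin n) ℂ | p.1.PosDef}
      (fun p => ((p.2 * p.1⁻¹ * p.2ᴴ).trace).re) :=
  stmt11_general
end

section
/- (Appendix Lemma 2) Let A be an N×N Hermitian positive definite complex matrix (N ≥ 1) and set a = Tr[A^{-1}] (so a > 0). Then Tr[(I_N + A)^{-1}] ≤ N·a/(N + a), and equality holds if A = (N/a)·I_N. -/
open Matrix
open scoped ComplexOrder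

/-! Writing `f x = x / (1 + t * x)`, the functional calculus gives `(t • 1 + A)⁻¹ = f (A⁻¹)` for
positive definite `A`. As `f` is concave on `[0, ∞)`, Jensen's inequality for the eigenvalues of
`A⁻¹` bounds the trace of `f (A⁻¹)` by `N * f (Tr[A⁻¹] / N)`. -/

theorem concaveOn_div_one_add_mul {t : ℝ} (ht : 0 ≤ t) :
    ConcaveOn ℝ (Set.Ici 0) fun x ↦ x / (1 + t * x) := by
  refine ⟨convex_Ici 0, fun x hx y hy p q hp hq hpq ↦ ?_⟩
  rw [Set.mem_Ici] at hx hy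
  obtain rfl : q = 1 - p := by linarith
  simp only [smul_eq_mul]
  have : 0 ≤ p * x + (1 - p) * y := by positivity
  have gap : (p * x + (1 - p) * y) / (1 + t * (p * x + (1 - p) * y)) -
      (p * (x / (1 + t * x)) + (1 - p) * (y / (1 + t * y))) =
      t * p * (1 - p) * (x - y) ^ 2 /
        ((1 + t * x) * (1 + t * y) * (1 + t * (p * x + (1 - p) * y))) := by
    field_simp
    ring
  have gap_nonneg : 0 ≤ t * p * (1 - p) * (x - y) ^ 2 /
      ((1 + t * x) * (1 + t * y) * (1 + t * (p * x + (1 - p) * y))) := by positivity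
  linarith

section

variable {n 𝕜 : Type*} [RCLike 𝕜] [Fintype n] [DecidableEq n] {A : Matrix n n 𝕜}

theorem trace_cfc_eq_sum_eigenvalues (hA : A.IsHermitian) (f : ℝ → ℝ) :
    (cfc f A).trace = ∑ i, (f (hA.eigenvalues i) : 𝕜) := by
  rw [hA.cfc_eq, IsHermitian.cfc, Unitary.conjStarAlgAut_apply, trace_mul_cycle,
    Unitary.coe_star_mul_self, one_mul, trace_diagonal]
  rfl

theorem re_trace_cfc_le_of_concaveOn [Nonempty n] {s : Set ℝ} {f : ℝ → ℝ} (hf : ConcaveOn ℝ s f)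
    (hA : A.IsHermitian) (hs : spectrum ℝ A ⊆ s) :
    RCLike.re (cfc f A).trace ≤
      Fintype.card n * f (RCLike.re A.trace / Fintype.card n) := by
  have card_pos : (0 : ℝ) < Fintype.card n := by exact_mod_cast Fintype.card_pos
  have jensen := hf.le_map_sum (t := Finset.univ) (w := fun _ ↦ (Fintype.card n : ℝ)⁻¹)
    (p := hA.eigenvalues) (fun _ _ ↦ by positivity) (by simp)
    (fun i _ ↦ hs (hA.eigenvalues_mem_spectrum_real i))
  simp only [smul_eq_mul, ← Finset.mul_sum] at jensen
  simp only [inv_mul_eq_div] at jensen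
  rw [trace_cfc_eq_sum_eigenvalues hA, hA.trace_eq_sum_eigenvalues, ← RCLike.ofReal_sum,
    ← RCLike.ofReal_sum, RCLike.ofReal_re, RCLike.ofReal_re]
  exact (div_le_iff₀' card_pos).mp jensen

theorem spectrum_real_subset_Ioi_of_posDef (hA : A.PosDef) : spectrum ℝ A ⊆ Set.Ioi 0 := by
  rw [hA.isHermitian.spectrum_real_eq_range_eigenvalues]
  exact Set.range_subset_iff.mpr hA.eigenvalues_pos

theorem cfc_inv_eq_inv_of_ne_zero (hA : A.IsHermitian) {f : ℝ → ℝ}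
    (hf : ∀ x ∈ spectrum ℝ A, f x ≠ 0) : cfc (fun x ↦ (f x)⁻¹) A = (cfc f A)⁻¹ := by
  rw [nonsing_inv_eq_ringInverse,
    cfc_inv f A hf (A.finite_real_spectrum.continuousOn f) hA.isSelfAdjoint]

theorem cfc_div_one_add_mul_inv (hA : A.PosDef) {t : ℝ} (ht : 0 ≤ t) :
    cfc (fun x ↦ x / (1 + t * x)) A⁻¹ = (t • 1 + A)⁻¹ := by
  have spectrum_pos := spectrum_real_subset_Ioi_of_posDef hA.inv
  have hB := hA.inv.isHermitian
  have continuousOn_inv := A⁻¹.finite_real_spectrum.continuousOn (fun x : ℝ ↦ x⁻¹)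
  have cfc_inv_self : cfc (fun x : ℝ ↦ x⁻¹) A⁻¹ = A := by
    rw [cfc_inv_eq_inv_of_ne_zero hB fun x hx ↦ (spectrum_pos hx).ne',
      cfc_id' ℝ A⁻¹ hB.isSelfAdjoint, nonsing_inv_nonsing_inv A hA.det_pos.ne'.isUnit]
  calc cfc (fun x ↦ x / (1 + t * x)) A⁻¹
      = cfc (fun x ↦ (t + x⁻¹)⁻¹) A⁻¹ := cfc_congr fun x hx ↦ by
        have : 0 < x := spectrum_pos hx
        field_simp
        ring
    _ = (cfc (fun x ↦ t + x⁻¹) A⁻¹)⁻¹ := cfc_inv_eq_inv_of_ne_zero hB fun x hx ↦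
        (add_pos_of_nonneg_of_pos ht (inv_pos.mpr (spectrum_pos hx))).ne'
    _ = (t • 1 + A)⁻¹ := by
        rw [cfc_const_add t _ _ continuousOn_inv hB.isSelfAdjoint, cfc_inv_self,
          Algebra.algebraMap_eq_smul_one]

theorem re_trace_inv_smul_one {c : ℝ} (hc : c ≠ 0) :
    RCLike.re ((c • (1 : Matrix n n 𝕜))⁻¹).trace = Fintype.card n / c := by
  have inv_smul_one : (c • (1 : Matrix n n 𝕜))⁻¹ = c⁻¹ • 1 :=
    inv_eq_right_inv (by rw [smul_mul_smul_comm, mul_one, mul_inv_cancel₀ hc, one_smul])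
  rw [inv_smul_one, trace_smul, trace_one, RCLike.smul_re, RCLike.natCast_re, inv_mul_eq_div]

theorem stmt15_general [Nonempty n] (hA : A.PosDef) {t : ℝ} (ht : 0 ≤ t) {a : ℝ}
    (ha : a = RCLike.re (A⁻¹).trace) :
    RCLike.re ((t • 1 + A)⁻¹).trace ≤ Fintype.card n * a / (Fintype.card n + t * a) ∧
      (A = (Fintype.card n / a : ℝ) • 1 →
        RCLike.re ((t • 1 + A)⁻¹).trace = Fintype.card n * a / (Fintype.card n + t * a)) := by
  have : (0 : ℝ) < Fintype.card n := by exact_mod_cast Fintype.card_pos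
  have a_pos : 0 < a := ha ▸ (RCLike.pos_iff.mp hA.inv.trace_pos).1
  constructor
  · have jensen := re_trace_cfc_le_of_concaveOn (concaveOn_div_one_add_mul ht)
      hA.inv.isHermitian
      ((spectrum_real_subset_Ioi_of_posDef hA.inv).trans Set.Ioi_subset_Ici_self)
    rw [cfc_div_one_add_mul_inv hA ht, ← ha] at jensen
    refine jensen.trans_eq ?_
    field_simp
  · intro hA_scalar
    rw [hA_scalar, ← add_smul, re_trace_inv_smul_one (by positivity)]
    field_simp
    ring

end

/-- Appendix Lemma 2: for Hermitian positive definite `A` with `a = Tr[A⁻¹]`,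
`Tr[(I + A)⁻¹] ≤ N·a/(N + a)`, with equality if `A = (N/a)·I`. -/
theorem stmt15 (N : ℕ) (hN : 1 ≤ N) (A : Matrix (Fin N) (Fin N) ℂ)
    (hA : A.PosDef) (a : ℝ) (ha : a = ((A⁻¹).trace).re) :
    (((1 + A)⁻¹).trace).re ≤ (N : ℝ) * a / ((N : ℝ) + a) ∧
      (A = (((N : ℝ) / a : ℝ) : ℂ) • 1 →
        (((1 + A)⁻¹).trace).re = (N : ℝ) * a / ((N : ℝ) + a)) := by
  have : Nonempty (Fin N) := ⟨⟨0, hN⟩⟩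
  simpa only [one_smul, one_mul, Fintype.card_fin, Complex.coe_smul, RCLike.re_eq_complex_re]
    using stmt15_general hA zero_le_one ha
end
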